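/- There exists a universal constant C > 0 such that for all integers n1, n2 > 1 with n = n1·n2, all σ > 0, and every θ* ∈ M, the isotonic least squares estimator satisfies the adaptive oracle bound R(θ*, θ̂) ≤ inf over θ ∈ M of { ||θ* − θ||² / n + C·k(θ)·σ²·(log n)⁸ / n }. -/

import Mathlib

open MeasureTheory ProbabilityTheory

noncomputable section

/-- The set of isotonic (coordinatewise nondecreasing) `n1 × n2` matrices. -/
def Isotonic {n1 n2 : ℕ} (θ : Fin n1 → Fin n2 → ℝ) : Prop :=
  ∀ ⦃i k : Fin n1⦄ ⦃j l : Fin n2⦄, i ≤ k → j ≤ l → θ i j ≤ θ k l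

/-- Squared Frobenius norm of a matrix. -/
def frobSq {n1 n2 : ℕ} (θ : Fin n1 → Fin n2 → ℝ) : ℝ :=
  ∑ i, ∑ j, θ i j ^ 2

/-- The law of an `n1 × n2` matrix with i.i.d. `N(0, σ²)` entries. -/
def noiseMeasure (n1 n2 : ℕ) (σ : ℝ) : Measure (Fin n1 → Fin n2 → ℝ) :=
  Measure.pi fun _ => Measure.pi fun _ => gaussianReal 0 ⟨σ ^ 2, sq_nonneg σ⟩

/-- `lse` is the least squares estimator: for every data matrix `y`, `lse y` minimizes
the squared Frobenius distance to `y` over the cone of isotonic matrices. -/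
def IsLSE {n1 n2 : ℕ} (lse : (Fin n1 → Fin n2 → ℝ) → Fin n1 → Fin n2 → ℝ) : Prop :=
  ∀ y, Isotonic (lse y) ∧ ∀ θ, Isotonic θ → frobSq (y - lse y) ≤ frobSq (y - θ)

/-- The risk `R(θ*, est) = E ‖est(θ* + ε) − θ*‖² / n`, where `ε` has i.i.d. `N(0,σ²)`
entries and `n = n1 n2`. -/
def risk {n1 n2 : ℕ} (σ : ℝ) (θstar : Fin n1 → Fin n2 → ℝ)
    (est : (Fin n1 → Fin n2 → ℝ) → Fin n1 → Fin n2 → ℝ) : ℝ :=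
  (∫ ε, frobSq (est (θstar + ε) - θstar) ∂noiseMeasure n1 n2 σ) / (n1 * n2)

/-- A rectangle `{(i,j) : k1 ≤ i ≤ l1, k2 ≤ j ≤ l2}` in `{1,…,n1} × {1,…,n2}`. -/
def IsRect {n1 n2 : ℕ} (A : Set (Fin n1 × Fin n2)) : Prop :=
  ∃ (k1 l1 : Fin n1) (k2 l2 : Fin n2), k1 ≤ l1 ∧ k2 ≤ l2 ∧
    A = {p | k1 ≤ p.1 ∧ p.1 ≤ l1 ∧ k2 ≤ p.2 ∧ p.2 ≤ l2}

/-- A rectangular partition: pairwise disjoint rectangles covering the whole index set. -/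
def IsRectPartition {n1 n2 : ℕ} (P : Finset (Set (Fin n1 × Fin n2))) : Prop :=
  (∀ A ∈ P, IsRect A) ∧
  (∀ A ∈ P, ∀ B ∈ P, A ≠ B → Disjoint A B) ∧
  (∀ p : Fin n1 × Fin n2, ∃ A ∈ P, p ∈ A)

/-- `θ` is constant on each member of the partition `P`. -/
def ConstOnPartition {n1 n2 : ℕ} (θ : Fin n1 → Fin n2 → ℝ)
    (P : Finset (Set (Fin n1 × Fin n2))) : Prop :=
  ∀ A ∈ P, ∀ p ∈ A, ∀ q ∈ A, θ p.1 p.2 = θ q.1 q.2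

/-- `k(θ)`: the smallest number of rectangles in a rectangular partition on which `θ`
is constant. -/
def kRect {n1 n2 : ℕ} (θ : Fin n1 → Fin n2 → ℝ) : ℕ :=
  sInf {k | ∃ P, IsRectPartition P ∧ ConstOnPartition θ P ∧ P.card = k}

/-!
Let `θ` be isotonic and constant on a rectangular partition into `k(θ)` pieces, and put
`v = θ̂ - θ`. Since `θ̂` is a projection onto a convex set, `‖θ̂ - θ*‖²` is at most
`‖θ* - θ‖² + ∑ x, (2 ε x v x - v x ²)`, and the last sum splits over the pieces, on each of which
`v` is monotone. It therefore suffices to show `(∑ x ∈ A, ε x u x)² ≤ D ∑ x ∈ A, u x ²` for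
nonnegative antitone or monotone `u` on a rectangle `A`, as completing the square then bounds the
contribution of each piece by `2 D`.

Let `B` be the largest of the squared sums of `ε` over rectangles, normalized by their sizes.
Repeatedly cutting a lower set at a median row splits it into dyadic families of rectangles, so
sums over lower sets are controlled by `B` up to a factor `log³ n`. Superlevel sets of antitone
functions are lower sets, and summing over the levels costs a harmonic factor, so `D` is of order
`B log⁴ n`. Finally `B` is the maximum of `n²` squares of `N(0, σ²)` variables, so its expectation
is of order `σ² log n`.
-/

open Finset
open scoped Finset NNReal

section LayerCake

variable {ι R : Type*} {s : Finset ι}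

theorem sum_mul_nonneg_of_superlevel [CommRing R] [LinearOrder R] [IsStrictOrderedRing R]
    {u w : ι → R} (hu : ∀ x ∈ s, 0 ≤ u x)
    (hw : ∀ τ, 0 < τ → 0 ≤ ∑ x ∈ s with τ ≤ u x, w x) : 0 ≤ ∑ x ∈ s, w x * u x := by
  induction s using Finset.strongInduction generalizing u with
  | H s ih =>
    rcases s.eq_empty_or_nonempty with rfl | hs
    · simp
    obtain ⟨a, ha, hmin⟩ := s.exists_min_image u hs
    have hbase : 0 ≤ u a * ∑ x ∈ s, w x := by
      rcases (hu a ha).eq_or_lt with h0 | hpos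
      · simp [← h0]
      · have := hw (u a) hpos
        rw [filter_true_of_mem hmin] at this
        positivity
    have habove : 0 ≤ ∑ x ∈ s with u a < u x, w x * (u x - u a) := by
      refine ih {x ∈ s | u a < u x} (filter_ssubset.2 ⟨a, ha, lt_irrefl _⟩)
        (fun x hx ↦ sub_nonneg.2 (mem_filter.1 hx).2.le) fun τ hτ ↦ ?_
      convert hw (τ + u a) (add_pos_of_pos_of_nonneg hτ (hu a ha)) using 2
      ext x
      simp only [mem_filter, le_sub_iff_add_le, and_assoc, and_congr_right_iff,
        and_iff_right_iff_imp]
      exact fun _ h ↦ (lt_add_of_pos_left _ hτ).trans_le h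
    have hrest : ∑ x ∈ s with u a < u x, w x * (u x - u a) = ∑ x ∈ s, w x * (u x - u a) := by
      refine sum_filter_of_ne fun x hx hne ↦ (hmin x hx).lt_of_ne fun h ↦ hne ?_
      rw [h, sub_self, mul_zero]
    calc 0 ≤ u a * ∑ x ∈ s, w x + ∑ x ∈ s, w x * (u x - u a) := by
          rw [← hrest]; exact add_nonneg hbase habove
      _ = ∑ x ∈ s, w x * u x := by
          rw [mul_sum, ← sum_add_distrib]
          exact sum_congr rfl fun x _ ↦ by ring

theorem sum_inv_card_superlevel_le_harmonic [LinearOrder R] (s : Finset ι) (u : ι → R) :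
    ∑ x ∈ s, (#{y ∈ s | u x ≤ u y} : ℚ)⁻¹ ≤ harmonic #s := by
  classical
  induction s using Finset.induction_on_min_value u with
  | empty => simp
  | insert a s has hmin ih =>
    rw [sum_insert has, card_insert_of_notMem has, harmonic_succ, add_comm]
    refine add_le_add ((sum_le_sum fun x hx ↦ ?_).trans ih) ?_
    · have hpos : 0 < #{y ∈ s | u x ≤ u y} := card_pos.2 ⟨x, mem_filter.2 ⟨hx, le_rfl⟩⟩
      gcongr
      exact subset_insert a s
    · rw [filter_true_of_mem (by simpa using hmin), card_insert_of_notMem has]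

/-- The layer-cake bound applied to `± c` reduces the claim to `c = (#{y | u x ≤ u y})^(-1/2)`,
for which Cauchy–Schwarz produces a harmonic sum. -/
theorem sq_sum_mul_le_of_superlevel {c u : ι → ℝ} {A : ℝ} (hA : 0 ≤ A) (hu : ∀ x ∈ s, 0 ≤ u x)
    (hc : ∀ τ, 0 < τ → (∑ x ∈ s with τ ≤ u x, c x) ^ 2 ≤ A * #{x ∈ s | τ ≤ u x}) :
    (∑ x ∈ s, c x * u x) ^ 2 ≤ A * harmonic #s * ∑ x ∈ s, u x ^ 2 := by
  set r : ι → ℝ := fun x ↦ √A * (√(#{y ∈ s | u x ≤ u y} : ℝ))⁻¹ with hr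
  have hrank (x) (hx : x ∈ s) : 0 < #{y ∈ s | u x ≤ u y} :=
    card_pos.2 ⟨x, mem_filter.2 ⟨hx, le_rfl⟩⟩
  have hlevel (τ : ℝ) : √(A * #{x ∈ s | τ ≤ u x}) ≤ ∑ x ∈ s with τ ≤ u x, r x := by
    have hterm : ∀ x ∈ ({x ∈ s | τ ≤ u x} : Finset ι),
        √A * (√(#{y ∈ s | τ ≤ u y} : ℝ))⁻¹ ≤ r x := by
      intro x hx
      obtain ⟨hxs, hτx⟩ := mem_filter.1 hx
      have := hrank x hxs
      simp only [hr]
      gcongr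
    refine le_trans (le_of_eq ?_) (card_nsmul_le_sum _ _ _ hterm)
    rw [nsmul_eq_mul, Real.sqrt_mul hA, mul_left_comm, ← div_eq_mul_inv, Real.div_sqrt]
  have habs : |∑ x ∈ s, c x * u x| ≤ ∑ x ∈ s, r x * u x := by
    refine abs_le'.2 ⟨?_, ?_⟩ <;> rw [← sub_nonneg]
    · simp only [← sum_sub_distrib, ← sub_mul]
      refine sum_mul_nonneg_of_superlevel hu fun τ hτ ↦ ?_
      rw [sum_sub_distrib, sub_nonneg]
      exact (Real.le_sqrt_of_sq_le (hc τ hτ)).trans (hlevel τ)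
    · simp only [← sum_neg_distrib, ← sum_sub_distrib, ← neg_mul, ← sub_mul]
      refine sum_mul_nonneg_of_superlevel hu fun τ hτ ↦ ?_
      rw [sum_sub_distrib, sum_neg_distrib, sub_nonneg]
      exact (Real.le_sqrt_of_sq_le ((neg_sq _).trans_le (hc τ hτ))).trans (hlevel τ)
  have hharm : ∑ x ∈ s, r x ^ 2 ≤ A * harmonic #s := by
    have h := sum_inv_card_superlevel_le_harmonic s u
    rify at h
    simpa only [hr, mul_pow, inv_pow, Real.sq_sqrt hA, Real.sq_sqrt (Nat.cast_nonneg _),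
      ← mul_sum] using mul_le_mul_of_nonneg_left h hA
  calc (∑ x ∈ s, c x * u x) ^ 2
      ≤ (∑ x ∈ s, r x * u x) ^ 2 := sq_le_sq' (abs_le.1 habs).1 (abs_le.1 habs).2
    _ ≤ (∑ x ∈ s, r x ^ 2) * ∑ x ∈ s, u x ^ 2 := sum_mul_sq_le_sq_mul_sq s r u
    _ ≤ A * harmonic #s * ∑ x ∈ s, u x ^ 2 := by gcongr

end LayerCake

section RectBound

variable {α β : Type*} [LinearOrder α] [LinearOrder β]

/-- Every sum of `e` over a rectangle `s ×ˢ t`, with `s` and `t` order-convex, is at most the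
square root of `B * #(s ×ˢ t)` in absolute value: the size of the rectangle sums of centred noise
of variance `B`. -/
def HasRectBound (e : α × β → ℝ) (B : ℝ) : Prop :=
  ∀ (s : Finset α) (t : Finset β), (s : Set α).OrdConnected → (t : Set β).OrdConnected →
    (∑ x ∈ s ×ˢ t, e x) ^ 2 ≤ B * #(s ×ˢ t)

theorem add_sq_le_of_sq_le_mul {a b x₁ x₂ y₁ y₂ : ℝ} (hx₁ : 0 ≤ x₁) (hx₂ : 0 ≤ x₂) (hy₁ : 0 ≤ y₁)
    (hy₂ : 0 ≤ y₂) (ha : a ^ 2 ≤ x₁ * x₂) (hb : b ^ 2 ≤ y₁ * y₂) :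
    (a + b) ^ 2 ≤ (x₁ + y₁) * (x₂ + y₂) := by
  simpa using sum_sq_le_sum_mul_sum_of_sq_le_mul univ (r := ![a, b]) (f := ![x₁, y₁])
    (g := ![x₂, y₂]) (by simp [Fin.forall_fin_two, *]) (by simp [Fin.forall_fin_two, *])
    (by simp [Fin.forall_fin_two, *])

theorem ordConnected_coe_filter {s : Finset α} {p : α → Prop} [DecidablePred p]
    (hs : (s : Set α).OrdConnected) (hp : {x | p x}.OrdConnected) :
    (({x ∈ s | p x} : Finset α) : Set α).OrdConnected := by
  rw [coe_filter]
  exact hs.inter hp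

theorem exists_median {s : Finset α} (hs : s.Nonempty) :
    ∃ r, 2 * #{i ∈ s | i < r} ≤ #s ∧ 2 * #{i ∈ s | r < i} ≤ #s := by
  set f := s.orderEmbOfFin rfl
  set c : Fin #s := ⟨#s / 2, Nat.div_lt_self hs.card_pos one_lt_two⟩ with hc
  have hcard (p : α → Prop) [DecidablePred p] : #{i ∈ s | p i} = #{k | p (f k)} := by
    calc #{i ∈ s | p i} = #{i ∈ univ.map f.toEmbedding | p i} := by rw [map_orderEmbOfFin_univ]
      _ = #{k | p (f k)} := by rw [filter_map, card_map]; rfl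
  have hlt : #{i ∈ s | i < f c} = #s / 2 := by simp [hcard, hc, filter_gt_eq_Iio]
  have hgt : #{i ∈ s | f c < i} = #s - 1 - #s / 2 := by simp [hcard, hc, filter_lt_eq_Ioi]
  exact ⟨f c, by lia, by lia⟩

section LowerSet

variable {s : Finset α} {t : Finset β} {U : Set (α × β)} [DecidablePred (· ∈ U)]

theorem ordConnected_coe_filter_mk_mem (ht : (t : Set β).OrdConnected) (hU : IsLowerSet U) (r : α) :
    (({j ∈ t | (r, j) ∈ U} : Finset β) : Set β).OrdConnected :=
  ordConnected_coe_filter ht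
    (hU.preimage fun _ _ h ↦ Prod.mk_le_mk.2 ⟨le_rfl, h⟩).ordConnected

theorem ordConnected_coe_filter_mk_notMem (ht : (t : Set β).OrdConnected) (hU : IsLowerSet U)
    (r : α) : (({j ∈ t | (r, j) ∉ U} : Finset β) : Set β).OrdConnected :=
  ordConnected_coe_filter ht
    (hU.compl.preimage fun _ _ h ↦ Prod.mk_le_mk.2 ⟨le_rfl, h⟩).ordConnected

theorem sum_product_filter_mem_lowerSet {M : Type*} [AddCommMonoid M] (hU : IsLowerSet U) (r : α)
    (f : α × β → M) :
    ∑ x ∈ s ×ˢ t with x ∈ U, f x =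
      ∑ x ∈ {i ∈ s | i ≤ r} ×ˢ {j ∈ t | (r, j) ∈ U}, f x +
        (∑ x ∈ {i ∈ s | i < r} ×ˢ {j ∈ t | (r, j) ∉ U} with x ∈ U, f x +
          ∑ x ∈ {i ∈ s | r < i} ×ˢ {j ∈ t | (r, j) ∈ U} with x ∈ U, f x) := by
  have hdown {i k : α} {j : β} (hik : i ≤ k) (h : (k, j) ∈ U) : (i, j) ∈ U :=
    hU (Prod.mk_le_mk.2 ⟨hik, le_rfl⟩) h
  rw [← sum_union, ← sum_union]
  · congr 1
    ext ⟨i, j⟩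
    rcases lt_trichotomy i r with h | rfl | h <;>
    simp only [mem_union, mem_filter, mem_product] <;> grind
  · rw [disjoint_left]; grind
  · rw [disjoint_left]; grind

theorem card_add_card_le_card_filter_mem_lowerSet (hU : IsLowerSet U) (r : α) :
    #({i ∈ s | i ≤ r} ×ˢ {j ∈ t | (r, j) ∈ U}) +
      #{x ∈ {i ∈ s | i < r} ×ˢ {j ∈ t | (r, j) ∉ U} | x ∈ U} ≤ #{x ∈ s ×ˢ t | x ∈ U} := by
  simp only [card_eq_sum_ones]
  rw [sum_product_filter_mem_lowerSet (s := s) (t := t) hU r, ← add_assoc]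
  exact Nat.le_add_right _ _

/-- Cutting `s` at a median and iterating covers the region by dyadic rectangles, so that the total
size of the rectangles at each of the `p` scales is at most `#s * #t`. -/
theorem HasRectBound.sq_sum_filter_mem_lowerSet_le {e : α × β → ℝ} {B : ℝ} (he : HasRectBound e B)
    (hB : 0 ≤ B) (hU : IsLowerSet U) {p : ℕ} (hp : #s < 2 ^ p) (hs : (s : Set α).OrdConnected)
    (ht : (t : Set β).OrdConnected) :
    (∑ x ∈ s ×ˢ t with x ∈ U, e x) ^ 2 ≤ B * p ^ 2 * (#s * #t) := by
  induction p generalizing s t with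
  | zero => simp [card_eq_zero.1 (Nat.lt_one_iff.1 hp)]
  | succ p ih =>
    rcases s.eq_empty_or_nonempty with rfl | hne
    · simp
    obtain ⟨r, hlt, hgt⟩ := exists_median hne
    have hrect := he _ _ (ordConnected_coe_filter hs (Set.ordConnected_Iic (a := r)))
      (ordConnected_coe_filter_mk_mem ht hU r)
    have hleft := ih (by lia) (ordConnected_coe_filter hs (Set.ordConnected_Iio (a := r)))
      (ordConnected_coe_filter_mk_notMem ht hU r)
    have hright := ih (by lia) (ordConnected_coe_filter hs (Set.ordConnected_Ioi (a := r)))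
      (ordConnected_coe_filter_mk_mem ht hU r)
    have hsides : (∑ x ∈ {i ∈ s | i < r} ×ˢ {j ∈ t | (r, j) ∉ U} with x ∈ U, e x +
        ∑ x ∈ {i ∈ s | r < i} ×ˢ {j ∈ t | (r, j) ∈ U} with x ∈ U, e x) ^ 2 ≤
          B * (#s * #t) * p * p := by
      rw [← mul_assoc] at hleft hright
      refine (add_sq_le_of_sq_le_mul (by positivity) (by positivity) (by positivity)
        (by positivity) hleft hright).trans ?_
      have hst : (#{i ∈ s | i < r} : ℝ) + #{i ∈ s | r < i} ≤ #s := mod_cast by lia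
      have htt : (#{j ∈ t | (r, j) ∉ U} : ℝ) + #{j ∈ t | (r, j) ∈ U} = #t := mod_cast by
        rw [add_comm, card_filter_add_card_filter_not]
      rw [← mul_add, htt]
      calc B * p ^ 2 * (#{i ∈ s | i < r} + #{i ∈ s | r < i} : ℝ) * #t
          ≤ B * p ^ 2 * #s * #t := by gcongr
        _ = B * (#s * #t) * p * p := by ring
    have hrect' : _ ≤ B * (#s * #t) * 1 := hrect.trans <| by
      rw [card_product, Nat.cast_mul, mul_one]
      gcongr <;> exact filter_subset _ _
    rw [sum_product_filter_mem_lowerSet hU r]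
    refine (add_sq_le_of_sq_le_mul (by positivity) (by positivity) (by positivity)
      (by positivity) hrect' hsides).trans_eq ?_
    push_cast
    ring

/-- As in `HasRectBound.sq_sum_filter_mem_lowerSet_le`, but the rectangle that the median cut leaves
in the corner lies in `U` and dominates the box `{i ∈ s | r < i} ×ˢ {j ∈ t | (r, j) ∈ U}`, so all
sizes can be compared with that of the region itself. -/
theorem HasRectBound.sq_sum_filter_mem_lowerSet_le_card {e : α × β → ℝ} {B : ℝ}
    (he : HasRectBound e B) (hB : 0 ≤ B) (hU : IsLowerSet U) {p : ℕ} (hp : #s < 2 ^ p)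
    (hs : (s : Set α).OrdConnected) (ht : (t : Set β).OrdConnected) :
    (∑ x ∈ s ×ˢ t with x ∈ U, e x) ^ 2 ≤ B * p ^ 3 * #{x ∈ s ×ˢ t | x ∈ U} := by
  induction p generalizing s t with
  | zero => simp [card_eq_zero.1 (Nat.lt_one_iff.1 hp)]
  | succ p ih =>
    rcases s.eq_empty_or_nonempty with rfl | hne
    · simp
    obtain ⟨r, hlt, hgt⟩ := exists_median hne
    set R := {i ∈ s | i ≤ r} ×ˢ {j ∈ t | (r, j) ∈ U}
    set L := {x ∈ {i ∈ s | i < r} ×ˢ {j ∈ t | (r, j) ∉ U} | x ∈ U}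
    have hrect : _ ≤ B * #R * 1 := (he _ _
      (ordConnected_coe_filter hs (Set.ordConnected_Iic (a := r)))
      (ordConnected_coe_filter_mk_mem ht hU r)).trans_eq (mul_one _).symm
    have hleft := ih (by lia) (ordConnected_coe_filter hs (Set.ordConnected_Iio (a := r)))
      (ordConnected_coe_filter_mk_notMem ht hU r)
    have hright : _ ≤ B * #R * p * p :=
      (he.sq_sum_filter_mem_lowerSet_le hB hU (p := p) (by lia)
        (ordConnected_coe_filter hs (Set.ordConnected_Ioi (a := r)))
        (ordConnected_coe_filter_mk_mem ht hU r)).trans <| by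
      have hle : #{i ∈ s | r < i} ≤ #{i ∈ s | i ≤ r} := by
        have := s.card_filter_add_card_filter_not (· ≤ r)
        simp only [not_le] at this
        lia
      calc B * p ^ 2 * (#{i ∈ s | r < i} * #{j ∈ t | (r, j) ∈ U} : ℝ)
          ≤ B * p ^ 2 * (#{i ∈ s | i ≤ r} * #{j ∈ t | (r, j) ∈ U} : ℝ) := by gcongr
        _ = B * #R * p * p := by rw [card_product, Nat.cast_mul]; ring
    have hcard : (#R : ℝ) + #L ≤ #{x ∈ s ×ˢ t | x ∈ U} :=
      mod_cast card_add_card_le_card_filter_mem_lowerSet hU r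
    have hRright := (add_sq_le_of_sq_le_mul (by positivity) (by positivity) (by positivity)
      (by positivity) hrect hright).trans_eq
        (show _ = B * (1 + p) ^ 2 * #R by ring)
    rw [sum_product_filter_mem_lowerSet hU r, add_left_comm]
    calc _ ≤ (B * p ^ 3 + B * (1 + p) ^ 2) * (#L + #R) :=
          add_sq_le_of_sq_le_mul (by positivity) (by positivity) (by positivity)
            (by positivity) hleft hRright
      _ ≤ B * (p + 1) ^ 3 * #{x ∈ s ×ˢ t | x ∈ U} := by
          rw [add_comm (#L : ℝ), ← mul_add]
          gcongr
          nlinarith [(Nat.cast_nonneg p : (0 : ℝ) ≤ p)]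
      _ = B * (p + 1 : ℕ) ^ 3 * #{x ∈ s ×ˢ t | x ∈ U} := by push_cast; rfl

end LowerSet

namespace HasRectBound

variable {e : α × β → ℝ} {B : ℝ} {s : Finset α} {t : Finset β} {p : ℕ}

theorem neg (he : HasRectBound e B) : HasRectBound (-e) B := fun s t hs ht ↦ by
  simpa only [Pi.neg_apply, sum_neg_distrib, neg_sq] using he s t hs ht

theorem dual (he : HasRectBound e B) :
    HasRectBound (α := αᵒᵈ) (β := βᵒᵈ)
      (fun x ↦ e (OrderDual.ofDual x.1, OrderDual.ofDual x.2)) B :=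
  fun s t hs ht ↦ he s t hs.dual ht.dual

theorem sq_sum_mul_le_of_antitoneOn (he : HasRectBound e B) (hB : 0 ≤ B) (hp : #s < 2 ^ p)
    (hs : (s : Set α).OrdConnected) (ht : (t : Set β).OrdConnected) {u : α × β → ℝ}
    (hu0 : ∀ x ∈ s ×ˢ t, 0 ≤ u x) (hu : AntitoneOn u (s ×ˢ t : Finset (α × β))) :
    (∑ x ∈ s ×ˢ t, e x * u x) ^ 2 ≤
      B * p ^ 3 * harmonic #(s ×ˢ t) * ∑ x ∈ s ×ˢ t, u x ^ 2 := by
  classical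
  refine sq_sum_mul_le_of_superlevel (by positivity) hu0 fun τ _ ↦ ?_
  set U : Set (α × β) := ↑(lowerClosure {x | x ∈ s ×ˢ t ∧ τ ≤ u x})
  have hU : {x ∈ s ×ˢ t | τ ≤ u x} = {x ∈ s ×ˢ t | x ∈ U} := by
    refine filter_congr fun x hx ↦ ⟨fun h ↦ subset_lowerClosure ⟨hx, h⟩, ?_⟩
    rintro ⟨y, ⟨hy, hτ⟩, hxy⟩
    exact hτ.trans (hu hx hy hxy)
  rw [hU]
  exact he.sq_sum_filter_mem_lowerSet_le_card hB (LowerSet.lower _) hp hs ht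

theorem sq_sum_mul_le_of_monotoneOn (he : HasRectBound e B) (hB : 0 ≤ B) (hp : #s < 2 ^ p)
    (hs : (s : Set α).OrdConnected) (ht : (t : Set β).OrdConnected) {u : α × β → ℝ}
    (hu0 : ∀ x ∈ s ×ˢ t, 0 ≤ u x) (hu : MonotoneOn u (s ×ˢ t : Finset (α × β))) :
    (∑ x ∈ s ×ˢ t, e x * u x) ^ 2 ≤
      B * p ^ 3 * harmonic #(s ×ˢ t) * ∑ x ∈ s ×ˢ t, u x ^ 2 :=
  he.dual.sq_sum_mul_le_of_antitoneOn hB hp hs.dual ht.dual hu0 fun _ hx _ hy h ↦ hu hy hx h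

theorem sum_two_mul_sub_sq_le_of_monotoneOn (he : HasRectBound e B) (hB : 0 ≤ B) (hp : #s < 2 ^ p)
    (hs : (s : Set α).OrdConnected) (ht : (t : Set β).OrdConnected) {v : α × β → ℝ}
    (hv : MonotoneOn v (s ×ˢ t : Finset (α × β))) :
    ∑ x ∈ s ×ˢ t, (2 * (e x * v x) - v x ^ 2) ≤ 2 * (B * p ^ 3 * harmonic #(s ×ˢ t)) := by
  set D := B * p ^ 3 * harmonic #(s ×ˢ t)
  have hD : 0 ≤ D := by
    have : (0 : ℝ) ≤ harmonic #(s ×ˢ t) := mod_cast sum_nonneg fun _ _ ↦ by positivity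
    positivity
  have hpos := two_mul_le_add_of_sq_le_mul hD (sum_nonneg fun x _ ↦ sq_nonneg _) <|
    he.sq_sum_mul_le_of_monotoneOn hB hp hs ht (fun x _ ↦ posPart_nonneg (v x))
      fun _ hx _ hy h ↦ posPart_mono (hv hx hy h)
  have hneg := two_mul_le_add_of_sq_le_mul hD (sum_nonneg fun x _ ↦ sq_nonneg _) <|
    he.neg.sq_sum_mul_le_of_antitoneOn hB hp hs ht (fun x _ ↦ negPart_nonneg (v x))
      fun _ hx _ hy h ↦ negPart_anti (hv hx hy h)
  have hsplit (x : α × β) : 2 * (e x * v x) - v x ^ 2 =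
      2 * (e x * (v x)⁺) - (v x)⁺ ^ 2 + (2 * ((-e) x * (v x)⁻) - (v x)⁻ ^ 2) := by
    have hsub := posPart_sub_negPart (v x)
    have hmul : (v x)⁺ * (v x)⁻ = 0 := by rcases le_total 0 (v x) with h | h <;> simp [h]
    rw [Pi.neg_apply]
    linear_combination (v x + (v x)⁺ - (v x)⁻ - 2 * e x) * hsub + 2 * hmul
  simp only [hsplit, sum_add_distrib, sum_sub_distrib, ← mul_sum]
  linarith

end HasRectBound

end RectBound

section Scan

variable {α β : Type*} [LinearOrder α] [LinearOrder β] [LocallyFiniteOrder α] [LocallyFiniteOrder β]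

theorem exists_eq_uIcc_of_ordConnected {s : Finset α} (hs : (s : Set α).OrdConnected)
    (hne : s.Nonempty) : ∃ a b, s = uIcc a b := by
  refine ⟨s.min' hne, s.max' hne, ?_⟩
  rw [uIcc_of_le (min'_le_max' s hne)]
  refine Subset.antisymm (fun x hx ↦ mem_Icc.2 ⟨min'_le s x hx, le_max' s x hx⟩) fun x hx ↦ ?_
  exact hs.out (min'_mem s hne) (max'_mem s hne) (mem_Icc.1 hx)

/-- The scan statistic of `e` over rectangles: the supremum (the junk value `0` if there is none) of
the squared sums of `e` over nonempty rectangles, each divided by the size of its rectangle. A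
rectangle is encoded, with repetition, by a pair of opposite corners. -/
def rectScan (e : α × β → ℝ) : ℝ :=
  ⨆ q : (α × β) × α × β,
    ((√(#(uIcc q.1 q.2) : ℝ))⁻¹ * ∑ x ∈ uIcc q.1 q.2, e x) ^ 2

theorem rectScan_nonneg (e : α × β → ℝ) : 0 ≤ rectScan e :=
  Real.iSup_nonneg fun _ ↦ sq_nonneg _

theorem hasRectBound_rectScan [Finite α] [Finite β] (e : α × β → ℝ) :
    HasRectBound e (rectScan e) := by
  intro s t hs ht
  rcases s.eq_empty_or_nonempty with rfl | hsne
  · simp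
  rcases t.eq_empty_or_nonempty with rfl | htne
  · simp
  obtain ⟨a, b, rfl⟩ := exists_eq_uIcc_of_ordConnected hs hsne
  obtain ⟨c, d, rfl⟩ := exists_eq_uIcc_of_ordConnected ht htne
  have hcard : (0 : ℝ) < #(uIcc a b ×ˢ uIcc c d) := mod_cast (hsne.product htne).card_pos
  have hle := le_ciSup (f := fun q : (α × β) × α × β ↦
    ((√(#(uIcc q.1 q.2) : ℝ))⁻¹ * ∑ x ∈ uIcc q.1 q.2, e x) ^ 2) (Set.finite_range _).bddAbove
    ((a, c), (b, d))
  rw [← rectScan, uIcc_prod_def] at hle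
  dsimp only at hle
  rw [mul_pow, inv_pow, Real.sq_sqrt hcard.le, ← div_eq_inv_mul, div_le_iff₀ hcard] at hle
  exact hle

end Scan

section LeastSquares

variable {n1 n2 : ℕ}

theorem Isotonic.smul_add_smul {θ₁ θ₂ : Fin n1 → Fin n2 → ℝ} (h₁ : Isotonic θ₁) (h₂ : Isotonic θ₂)
    {a b : ℝ} (ha : 0 ≤ a) (hb : 0 ≤ b) : Isotonic (a • θ₁ + b • θ₂) := fun _ _ _ _ hik hjl ↦
  add_le_add (mul_le_mul_of_nonneg_left (h₁ hik hjl) ha) (mul_le_mul_of_nonneg_left (h₂ hik hjl) hb)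

theorem frobSq_sub_convexComb (y θ₁ θ₂ : Fin n1 → Fin n2 → ℝ) (s : ℝ) :
    frobSq (y - ((1 - s) • θ₁ + s • θ₂)) =
      (1 - s) * frobSq (y - θ₁) + s * frobSq (y - θ₂) - s * (1 - s) * frobSq (θ₁ - θ₂) := by
  simp only [frobSq, mul_sum, ← sum_add_distrib, ← sum_sub_distrib, Pi.sub_apply, Pi.add_apply,
    Pi.smul_apply, smul_eq_mul]
  exact sum_congr rfl fun i _ ↦ sum_congr rfl fun j _ ↦ by ring

variable {lse : (Fin n1 → Fin n2 → ℝ) → Fin n1 → Fin n2 → ℝ}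

theorem IsLSE.frobSq_sub_add_frobSq_sub_le (hlse : IsLSE lse) (y : Fin n1 → Fin n2 → ℝ)
    {θ : Fin n1 → Fin n2 → ℝ} (hθ : Isotonic θ) :
    frobSq (y - lse y) + frobSq (lse y - θ) ≤ frobSq (y - θ) := by
  obtain ⟨hiso, hmin⟩ := hlse y
  have hseg : ∀ s ∈ Set.Ioo (0 : ℝ) 1,
      frobSq (y - lse y) + (1 - s) * frobSq (lse y - θ) ≤ frobSq (y - θ) := by
    intro s ⟨hs0, hs1⟩
    have h := hmin _ (hiso.smul_add_smul hθ (sub_nonneg.2 hs1.le) hs0.le)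
    rw [frobSq_sub_convexComb] at h
    exact le_of_mul_le_mul_left (by linarith) hs0
  have hlim : Filter.Tendsto
      (fun s : ℝ ↦ frobSq (y - lse y) + (1 - s) * frobSq (lse y - θ)) (nhdsWithin 0 (Set.Ioi 0))
      (nhds (frobSq (y - lse y) + (1 - 0) * frobSq (lse y - θ))) :=
    (Continuous.tendsto (by fun_prop) 0).mono_left nhdsWithin_le_nhds
  rw [sub_zero, one_mul] at hlim
  exact le_of_tendsto hlim (Filter.mem_of_superset (Ioo_mem_nhdsGT one_pos) hseg)

theorem IsLSE.frobSq_sub_le (hlse : IsLSE lse) (θstar ε : Fin n1 → Fin n2 → ℝ)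
    {θ : Fin n1 → Fin n2 → ℝ} (hθ : Isotonic θ) :
    frobSq (lse (θstar + ε) - θstar) ≤ frobSq (θstar - θ) +
      ∑ x : Fin n1 × Fin n2, (2 * (ε x.1 x.2 * (lse (θstar + ε) - θ) x.1 x.2) -
        (lse (θstar + ε) - θ) x.1 x.2 ^ 2) := by
  have hpyth := hlse.frobSq_sub_add_frobSq_sub_le (θstar + ε) hθ
  generalize lse (θstar + ε) = w at *
  have hexpand : frobSq (w - θstar) - frobSq (θstar - θ) -
      ∑ x : Fin n1 × Fin n2, (2 * (ε x.1 x.2 * (w - θ) x.1 x.2) - (w - θ) x.1 x.2 ^ 2) =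
        frobSq (θstar + ε - w) + frobSq (w - θ) - frobSq (θstar + ε - θ) := by
    rw [Fintype.sum_prod_type]
    simp only [frobSq, ← sum_add_distrib, ← sum_sub_distrib, Pi.sub_apply, Pi.add_apply]
    exact sum_congr rfl fun i _ ↦ sum_congr rfl fun j _ ↦ by ring
  linarith

open Classical in
theorem IsRectPartition.sum_eq {M : Type*} [AddCommMonoid M] {P : Finset (Set (Fin n1 × Fin n2))}
    (hP : IsRectPartition P) (f : Fin n1 × Fin n2 → M) :
    ∑ x, f x = ∑ A ∈ P, ∑ x with x ∈ A, f x := by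
  simp_rw [sum_filter]
  rw [sum_comm]
  refine sum_congr rfl fun x _ ↦ ?_
  obtain ⟨A, hA, hxA⟩ := hP.2.2 x
  rw [sum_eq_single_of_mem A hA fun B hB hBA ↦
    if_neg fun hxB ↦ (hP.2.1 B hB A hA hBA).le_bot ⟨hxB, hxA⟩, if_pos hxA]

theorem IsRect.exists_eq_coe_product {A : Set (Fin n1 × Fin n2)} (hA : IsRect A) :
    ∃ (s : Finset (Fin n1)) (t : Finset (Fin n2)), (s : Set (Fin n1)).OrdConnected ∧
      (t : Set (Fin n2)).OrdConnected ∧ A = (s ×ˢ t : Finset (Fin n1 × Fin n2)) := by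
  obtain ⟨k1, l1, k2, l2, -, -, rfl⟩ := hA
  refine ⟨Icc k1 l1, Icc k2 l2, by simpa using Set.ordConnected_Icc,
    by simpa using Set.ordConnected_Icc, ?_⟩
  ext x
  simp only [Set.mem_ofPred_eq, mem_coe, mem_product, mem_Icc, and_assoc]

open Classical in
theorem IsRect.sum_two_mul_sub_sq_le {A : Set (Fin n1 × Fin n2)} (hA : IsRect A)
    {e : Fin n1 × Fin n2 → ℝ} {B : ℝ} (he : HasRectBound e B) (hB : 0 ≤ B) {p : ℕ}
    (hp : n1 < 2 ^ p) {v : Fin n1 × Fin n2 → ℝ} (hv : MonotoneOn v A) :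
    ∑ x with x ∈ A, (2 * (e x * v x) - v x ^ 2) ≤ 2 * (B * p ^ 3 * harmonic (n1 * n2)) := by
  obtain ⟨s, t, hs, ht, rfl⟩ := hA.exists_eq_coe_product
  have hcard : #(s ×ˢ t) ≤ n1 * n2 := by simpa using card_le_univ (s ×ˢ t)
  have hharm : (harmonic #(s ×ˢ t) : ℝ) ≤ harmonic (n1 * n2) := mod_cast
    sum_le_sum_of_subset_of_nonneg (range_mono hcard) fun _ _ _ ↦ by positivity
  simp only [mem_coe, filter_univ_mem]
  refine (he.sum_two_mul_sub_sq_le_of_monotoneOn hB ?_ hs ht hv).trans (by gcongr)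
  exact (card_le_univ s).trans_lt (by simpa using hp)

theorem IsLSE.frobSq_sub_le_of_hasRectBound (hlse : IsLSE lse)
    (θstar : Fin n1 → Fin n2 → ℝ) {ε θ : Fin n1 → Fin n2 → ℝ} (hθ : Isotonic θ)
    {P : Finset (Set (Fin n1 × Fin n2))} (hP : IsRectPartition P) (hθP : ConstOnPartition θ P)
    {B : ℝ} (he : HasRectBound (Function.uncurry ε) B) (hB : 0 ≤ B) {p : ℕ} (hp : n1 < 2 ^ p) :
    frobSq (lse (θstar + ε) - θstar) ≤
      frobSq (θstar - θ) + #P * (2 * (B * p ^ 3 * harmonic (n1 * n2))) := by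
  refine (hlse.frobSq_sub_le θstar ε hθ).trans (add_le_add_right ?_ _)
  rw [hP.sum_eq, ← nsmul_eq_mul]
  refine sum_le_card_nsmul _ _ _ fun A hA ↦ (hP.1 A hA).sum_two_mul_sub_sq_le he hB hp
    (v := Function.uncurry (lse (θstar + ε) - θ)) fun x hx y hy hxy ↦ ?_
  exact sub_le_sub ((hlse _).1 hxy.1 hxy.2) (hθP A hA y hy x hx).le

theorem exists_isRectPartition_card_eq_kRect (θ : Fin n1 → Fin n2 → ℝ) :
    ∃ P, IsRectPartition P ∧ ConstOnPartition θ P ∧ #P = kRect θ := by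
  classical
  refine Nat.sInf_mem (s := {k | ∃ P, IsRectPartition P ∧ ConstOnPartition θ P ∧ #P = k})
    ⟨_, univ.image fun x ↦ {x}, ⟨?_, ?_, ?_⟩, ?_, rfl⟩
  · simp only [mem_image, mem_univ, true_and, forall_exists_index, forall_apply_eq_imp_iff]
    refine fun x ↦ ⟨x.1, x.1, x.2, x.2, le_rfl, le_rfl, ?_⟩
    ext y
    simp only [Set.mem_singleton_iff, Set.mem_ofPred_eq, le_antisymm_iff, Prod.le_def]
    tauto
  · simp only [mem_image, mem_univ, true_and, forall_exists_index, forall_apply_eq_imp_iff]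
    exact fun x y hxy ↦ Set.disjoint_singleton.2 fun h ↦ hxy (by rw [h])
  · exact fun x ↦ ⟨{x}, mem_image_of_mem _ (mem_univ x), rfl⟩
  · simp only [ConstOnPartition, mem_image, mem_univ, true_and, forall_exists_index,
      forall_apply_eq_imp_iff, Set.mem_singleton_iff, forall_eq, implies_true]

end LeastSquares

section SubGaussian

theorem hasSubgaussianMGF_id_gaussianReal (v : ℝ≥0) :
    HasSubgaussianMGF id v (gaussianReal 0 v) where
  integrable_exp_mul := integrable_exp_mul_gaussianReal
  mgf_le t := by simp [mgf_id_gaussianReal]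

theorem hasSubgaussianMGF_sum_pi {ι : Type*} [Fintype ι] {Ω : ι → Type*}
    {mΩ : ∀ i, MeasurableSpace (Ω i)} {μ : ∀ i, Measure (Ω i)} [∀ i, IsProbabilityMeasure (μ i)]
    {X : ∀ i, Ω i → ℝ} {c : ι → ℝ≥0} (hX : ∀ i, HasSubgaussianMGF (X i) (c i) (μ i))
    (s : Finset ι) :
    HasSubgaussianMGF (fun ω ↦ ∑ i ∈ s, X i (ω i)) (∑ i ∈ s, c i) (Measure.pi μ) := by
  refine HasSubgaussianMGF.sum_of_iIndepFun (iIndepFun_pi fun i ↦ (hX i).aemeasurable) fun i _ ↦ ?_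
  have heval := measurePreserving_eval μ i
  exact HasSubgaussianMGF.of_map heval.aemeasurable (heval.map_eq.symm ▸ hX i)

theorem sq_le_two_mul_sq_add_exp {b : ℝ} (hb : 0 ≤ b) (z : ℝ) :
    z ^ 2 ≤ 2 * b ^ 2 + 4 * Real.exp (-b) * (Real.exp z + Real.exp (-z)) := by
  rcases le_total |z| b with h | h
  · have : z ^ 2 ≤ b ^ 2 := sq_le_sq.2 (h.trans_eq (abs_of_nonneg hb).symm)
    have : 0 ≤ Real.exp (-b) * (Real.exp z + Real.exp (-z)) := by positivity
    nlinarith [sq_nonneg b]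
  · have hexp : (|z| - b) ^ 2 / 2 ≤ Real.exp (-b) * (Real.exp z + Real.exp (-z)) :=
      calc (|z| - b) ^ 2 / 2 ≤ Real.exp (|z| - b) := by
            linarith [Real.quadratic_le_exp_of_nonneg (sub_nonneg.2 h)]
        _ = Real.exp (-b) * Real.exp |z| := by rw [← Real.exp_add]; ring_nf
        _ ≤ Real.exp (-b) * (Real.exp z + Real.exp (-z)) := by gcongr; exact Real.exp_abs_le z
    nlinarith [sq_abs z, sq_nonneg (|z| - 2 * b)]

variable {Ω ι : Type*} {mΩ : MeasurableSpace Ω} {μ : Measure Ω} {X : ι → Ω → ℝ} {c : ℝ≥0}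

theorem integrable_iSup_sq_of_hasSubgaussianMGF [Finite ι]
    (hX : ∀ i, HasSubgaussianMGF (X i) c μ) : Integrable (fun ω ↦ ⨆ i, X i ω ^ 2) μ := by
  cases nonempty_fintype ι
  refine Integrable.mono' (integrable_finsetSum univ fun i _ ↦ ((hX i).memLp 2).integrable_sq)
    (AEMeasurable.iSup fun i ↦ (hX i).aemeasurable.pow_const 2).aestronglyMeasurable
    (ae_of_all _ fun ω ↦ ?_)
  rw [Real.norm_of_nonneg (Real.iSup_nonneg fun i ↦ sq_nonneg _)]
  exact Real.iSup_le (fun i ↦ single_le_sum (f := fun i ↦ X i ω ^ 2) (fun j _ ↦ sq_nonneg _)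
    (mem_univ i)) (sum_nonneg fun i _ ↦ sq_nonneg _)

variable [Fintype ι] [IsProbabilityMeasure μ]

theorem sq_mul_integral_iSup_sq_le_of_hasSubgaussianMGF
    (hX : ∀ i, HasSubgaussianMGF (X i) c μ) {b : ℝ} (hb : 0 ≤ b) (t : ℝ) :
    t ^ 2 * ∫ ω, ⨆ i, X i ω ^ 2 ∂μ ≤
      2 * b ^ 2 + 8 * Fintype.card ι * Real.exp (c * t ^ 2 / 2 - b) := by
  set F : ι → Ω → ℝ := fun i ω ↦
    4 * Real.exp (-b) * (Real.exp (t * X i ω) + Real.exp (-t * X i ω)) with hF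
  have hFint (i : ι) : Integrable (F i) μ :=
    (((hX i).integrable_exp_mul t).add ((hX i).integrable_exp_mul (-t))).const_mul _
  have hFle (i : ι) : ∫ ω, F i ω ∂μ ≤ 8 * Real.exp (c * t ^ 2 / 2 - b) := by
    have hneg := (hX i).mgf_le (-t)
    rw [neg_sq] at hneg
    calc ∫ ω, F i ω ∂μ = 4 * Real.exp (-b) * (mgf (X i) μ t + mgf (X i) μ (-t)) := by
          rw [integral_const_mul, integral_add ((hX i).integrable_exp_mul t)
            ((hX i).integrable_exp_mul (-t)), mgf, mgf]
      _ ≤ 4 * Real.exp (-b) * (Real.exp (c * t ^ 2 / 2) + Real.exp (c * t ^ 2 / 2)) := by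
          gcongr
          exact (hX i).mgf_le t
      _ = 8 * Real.exp (c * t ^ 2 / 2 - b) := by
          rw [sub_eq_neg_add, Real.exp_add]
          ring
  have hpt (ω : Ω) : t ^ 2 * ⨆ i, X i ω ^ 2 ≤ 2 * b ^ 2 + ∑ i, F i ω := by
    rw [Real.mul_iSup_of_nonneg (sq_nonneg t)]
    refine Real.iSup_le (fun i ↦ ?_) (by positivity)
    calc t ^ 2 * X i ω ^ 2 ≤ 2 * b ^ 2 + F i ω := by
          simpa only [hF, neg_mul, mul_pow] using sq_le_two_mul_sq_add_exp hb (t * X i ω)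
      _ ≤ 2 * b ^ 2 + ∑ i, F i ω := by
          gcongr
          exact single_le_sum (f := fun i ↦ F i ω) (fun j _ ↦ by positivity) (mem_univ i)
  calc t ^ 2 * ∫ ω, ⨆ i, X i ω ^ 2 ∂μ = ∫ ω, t ^ 2 * ⨆ i, X i ω ^ 2 ∂μ :=
        (integral_const_mul _ _).symm
    _ ≤ ∫ ω, 2 * b ^ 2 + ∑ i, F i ω ∂μ :=
        integral_mono ((integrable_iSup_sq_of_hasSubgaussianMGF hX).const_mul _)
          ((integrable_const _).add (integrable_finsetSum _ fun i _ ↦ hFint i)) hpt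
    _ = 2 * b ^ 2 + ∑ i, ∫ ω, F i ω ∂μ := by
        rw [integral_add (integrable_const _) (integrable_finsetSum _ fun i _ ↦ hFint i),
          integral_finsetSum _ fun i _ ↦ hFint i]
        simp
    _ ≤ 2 * b ^ 2 + ∑ _i : ι, 8 * Real.exp (c * t ^ 2 / 2 - b) := by gcongr; exact hFle _
    _ = 2 * b ^ 2 + 8 * Fintype.card ι * Real.exp (c * t ^ 2 / 2 - b) := by
        rw [sum_const, card_univ, nsmul_eq_mul]
        ring

theorem integral_iSup_sq_le_of_hasSubgaussianMGF [Nonempty ι]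
    (hX : ∀ i, HasSubgaussianMGF (X i) c μ) (hc : 0 < c) :
    ∫ ω, ⨆ i, X i ω ^ 2 ∂μ ≤ c * (4 * Real.log (Fintype.card ι) + 6) := by
  set E := ∫ ω, ⨆ i, X i ω ^ 2 ∂μ
  set l := Real.log (Fintype.card ι) + 1 with hl
  have : (0 : ℝ) < c := hc
  have hcard : (1 : ℝ) ≤ Fintype.card ι := mod_cast Fintype.card_pos
  have hl1 : 1 ≤ l := by linarith [Real.log_nonneg hcard]
  have hexp : Fintype.card ι * Real.exp (-l) ≤ 1 / 2 := by
    rw [hl, neg_add, Real.exp_add, Real.exp_neg, Real.exp_log (by positivity),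
      mul_inv_cancel_left₀ (by positivity), Real.exp_neg, ← one_div]
    exact one_div_le_one_div_of_le two_pos (by linarith [Real.add_one_le_exp 1])
  have h := sq_mul_integral_iSup_sq_le_of_hasSubgaussianMGF hX (b := 2 * l) (by positivity)
    √(2 * l / c)
  rw [Real.sq_sqrt (by positivity), show c * (2 * l / c) / 2 - 2 * l = -l by field_simp; ring,
    mul_assoc] at h
  have : 2 * l * E ≤ 2 * l * (c * (4 * l + 2)) := by
    calc 2 * l * E = c * (2 * l / c * E) := by field_simp
      _ ≤ c * (2 * (2 * l) ^ 2 + 8 * (1 / 2)) := by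
          gcongr
          exact h.trans (by gcongr)
      _ ≤ 2 * l * (c * (4 * l + 2)) := by nlinarith
  have := le_of_mul_le_mul_left this (by positivity)
  rwa [hl, show 4 * (Real.log (Fintype.card ι) + 1) + 2 = 4 * Real.log (Fintype.card ι) + 6 by ring]
    at this

end SubGaussian

section Noise

variable {n1 n2 : ℕ}

theorem noiseMeasure_eq_pi (n1 n2 : ℕ) (σ : ℝ) :
    noiseMeasure n1 n2 σ =
      Measure.pi fun _ ↦ Measure.pi fun _ ↦ gaussianReal 0 (σ ^ 2).toNNReal := by
  rw [noiseMeasure, Real.toNNReal_of_nonneg (sq_nonneg σ)]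
  rfl

instance isProbabilityMeasure_noiseMeasure (σ : ℝ) :
    IsProbabilityMeasure (noiseMeasure n1 n2 σ) := by
  rw [noiseMeasure_eq_pi]
  infer_instance

theorem hasSubgaussianMGF_sum_product_noiseMeasure (σ : ℝ) (s : Finset (Fin n1))
    (t : Finset (Fin n2)) :
    HasSubgaussianMGF (fun ε ↦ ∑ x ∈ s ×ˢ t, Function.uncurry ε x)
      (#(s ×ˢ t) * (σ ^ 2).toNNReal) (noiseMeasure n1 n2 σ) := by
  have h := hasSubgaussianMGF_sum_pi (fun _ : Fin n1 ↦ hasSubgaussianMGF_sum_pi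
    (fun _ : Fin n2 ↦ hasSubgaussianMGF_id_gaussianReal (σ ^ 2).toNNReal) t) s
  simp only [sum_const, nsmul_eq_mul, ← sum_product'] at h
  rw [noiseMeasure_eq_pi, card_product, Nat.cast_mul, mul_assoc]
  exact h

theorem hasSubgaussianMGF_normalized_sum_uIcc_noiseMeasure (σ : ℝ) (a b : Fin n1 × Fin n2) :
    HasSubgaussianMGF
      (fun ε ↦ (√(#(uIcc a b) : ℝ))⁻¹ * ∑ x ∈ uIcc a b, Function.uncurry ε x)
      (σ ^ 2).toNNReal (noiseMeasure n1 n2 σ) := by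
  have h := (hasSubgaussianMGF_sum_product_noiseMeasure σ (uIcc a.1 b.1) (uIcc a.2 b.2)).const_mul
    (√(#(uIcc a b) : ℝ))⁻¹
  rw [← uIcc_prod_def] at h
  have hcard : (#(uIcc a b) : ℝ) ≠ 0 := mod_cast nonempty_uIcc.card_ne_zero
  convert h using 1
  refine NNReal.eq ?_
  change _ = (√(#(uIcc a b) : ℝ))⁻¹ ^ 2 * (#(uIcc a b) * ((σ ^ 2).toNNReal : ℝ))
  rw [inv_pow, Real.sq_sqrt (Nat.cast_nonneg _), inv_mul_cancel_left₀ hcard]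

theorem integrable_rectScan_noiseMeasure (σ : ℝ) :
    Integrable (fun ε ↦ rectScan (Function.uncurry ε)) (noiseMeasure n1 n2 σ) :=
  integrable_iSup_sq_of_hasSubgaussianMGF fun q ↦
    hasSubgaussianMGF_normalized_sum_uIcc_noiseMeasure σ q.1 q.2

theorem integral_rectScan_noiseMeasure_le [NeZero n1] [NeZero n2] {σ : ℝ} (hσ : 0 < σ) :
    ∫ ε, rectScan (Function.uncurry ε) ∂noiseMeasure n1 n2 σ ≤
      σ ^ 2 * (8 * Real.log (n1 * n2) + 6) := by
  have h := integral_iSup_sq_le_of_hasSubgaussianMGF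
    (fun q : (Fin n1 × Fin n2) × Fin n1 × Fin n2 ↦
      hasSubgaussianMGF_normalized_sum_uIcc_noiseMeasure σ q.1 q.2)
    (Real.toNNReal_pos.2 (pow_pos hσ 2))
  have hlog : Real.log (Fintype.card ((Fin n1 × Fin n2) × Fin n1 × Fin n2)) =
      2 * Real.log (n1 * n2) := by
    rw [Fintype.card_prod, ← sq, Nat.cast_pow, Real.log_pow]
    simp
  rw [hlog, Real.coe_toNNReal _ (sq_nonneg σ), ← mul_assoc, show (4 : ℝ) * 2 = 8 by norm_num] at h
  exact h

end Noise

section Risk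

variable {n1 n2 : ℕ}

theorem IsLSE.risk_le {lse : (Fin n1 → Fin n2 → ℝ) → Fin n1 → Fin n2 → ℝ} (hlse : IsLSE lse)
    (σ : ℝ) (θstar : Fin n1 → Fin n2 → ℝ) {θ : Fin n1 → Fin n2 → ℝ} (hθ : Isotonic θ) {p : ℕ}
    (hp : n1 < 2 ^ p) :
    risk σ θstar lse ≤ frobSq (θstar - θ) / (n1 * n2) +
      kRect θ * (2 * p ^ 3 * harmonic (n1 * n2)) *
        (∫ ε, rectScan (Function.uncurry ε) ∂noiseMeasure n1 n2 σ) / (n1 * n2) := by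
  obtain ⟨P, hP, hθP, hcard⟩ := exists_isRectPartition_card_eq_kRect θ
  set D : ℝ := kRect θ * (2 * p ^ 3 * harmonic (n1 * n2)) with hD
  have hpoint (ε : Fin n1 → Fin n2 → ℝ) : frobSq (lse (θstar + ε) - θstar) ≤
      frobSq (θstar - θ) + D * rectScan (Function.uncurry ε) := by
    refine (hlse.frobSq_sub_le_of_hasRectBound θstar hθ hP hθP (hasRectBound_rectScan _)
      (rectScan_nonneg _) hp).trans_eq ?_
    rw [hcard, hD]
    ring
  have hint := (integrable_rectScan_noiseMeasure (n1 := n1) (n2 := n2) σ).const_mul D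
  rw [risk, ← add_div]
  refine div_le_div_of_nonneg_right ?_ (by positivity)
  calc _ ≤ ∫ ε, (frobSq (θstar - θ) + D * rectScan (Function.uncurry ε)) ∂noiseMeasure n1 n2 σ :=
        integral_mono_of_nonneg
          (ae_of_all _ fun ε ↦ sum_nonneg fun i _ ↦ sum_nonneg fun j _ ↦ sq_nonneg _)
          ((integrable_const _).add hint) (ae_of_all _ hpoint)
    _ = frobSq (θstar - θ) +
          D * ∫ ε, rectScan (Function.uncurry ε) ∂noiseMeasure n1 n2 σ := by
        rw [integral_add (integrable_const _) hint, integral_const_mul, integral_const,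
          probReal_univ, one_smul]

theorem two_thirds_lt_log_of_one_lt {n : ℕ} (hn : 1 < n) : 2 / 3 < Real.log n := by
  have := Real.log_le_log two_pos (show (2 : ℝ) ≤ n by exact_mod_cast hn)
  linarith [Real.log_two_gt_d9]

theorem natLog_two_add_one_le_three_mul_log {n : ℕ} (hn : 1 < n) :
    (Nat.log 2 n + 1 : ℕ) ≤ 3 * Real.log n := by
  have hpow : ((2 : ℝ) ^ Nat.log 2 n) ≤ n := mod_cast Nat.pow_log_le_self 2 (by lia)
  have hlog := Real.log_le_log (by positivity) hpow
  rw [Real.log_pow] at hlog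
  have := Real.log_two_gt_d9
  have : (Nat.log 2 n : ℝ) * (2 / 3) ≤ Nat.log 2 n * Real.log 2 := by gcongr; linarith
  push_cast
  linarith [two_thirds_lt_log_of_one_lt hn]

theorem harmonic_le_mul_log {n : ℕ} (hn : 1 < n) :
    (harmonic n : ℝ) ≤ 5 / 2 * Real.log n := by
  linarith [harmonic_le_one_add_log n, two_thirds_lt_log_of_one_lt hn]

theorem isotonic_lse_adaptive_risk_general :
    ∃ C : ℝ, 0 < C ∧
      ∀ (n1 n2 : ℕ), 1 < n1 * n2 → ∀ σ : ℝ, 0 < σ →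
        ∀ θstar : Fin n1 → Fin n2 → ℝ, ∀ lse, IsLSE lse →
          ∀ θ : Fin n1 → Fin n2 → ℝ, Isotonic θ →
            risk σ θstar lse ≤
              frobSq (θstar - θ) / (n1 * n2) +
                C * kRect θ * σ ^ 2 * Real.log (n1 * n2) ^ 5 / (n1 * n2) := by
  refine ⟨2295, by norm_num, fun n1 n2 hn σ hσ θstar lse hlse θ hθ ↦ ?_⟩
  have hn2 : NeZero n2 := ⟨by rintro rfl; simp at hn⟩
  have hn1 : NeZero n1 := ⟨by rintro rfl; simp at hn⟩
  have hp : n1 < 2 ^ (Nat.log 2 (n1 * n2) + 1) :=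
    (Nat.le_mul_of_pos_right n1 (Nat.pos_of_ne_zero hn2.out)).trans_lt
      (Nat.lt_pow_succ_log_self one_lt_two _)
  have hlog := two_thirds_lt_log_of_one_lt hn
  have hpL := natLog_two_add_one_le_three_mul_log hn
  have hharm := harmonic_le_mul_log hn
  have hscan := integral_rectScan_noiseMeasure_le (n1 := n1) (n2 := n2) hσ
  rw [Nat.cast_mul] at hlog hpL hharm
  set L := Real.log (n1 * n2)
  refine (hlse.risk_le σ θstar hθ hp).trans ?_
  refine add_le_add_right (div_le_div_of_nonneg_right ?_ (by positivity)) _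
  calc _ ≤ kRect θ * (2 * (3 * L) ^ 3 * (5 / 2 * L)) * (σ ^ 2 * (17 * L)) := by
        have : (0 : ℝ) ≤ harmonic (n1 * n2) := mod_cast (harmonic_pos (by lia)).le
        have : 0 ≤ ∫ ε, rectScan (Function.uncurry ε) ∂noiseMeasure n1 n2 σ :=
          integral_nonneg fun _ ↦ rectScan_nonneg _
        have : σ ^ 2 * (8 * L + 6) ≤ σ ^ 2 * (17 * L) := by gcongr; linarith
        gcongr
        linarith
    _ = 2295 * kRect θ * σ ^ 2 * L ^ 5 := by ring

end Risk

theorem one_le_log_of_four_le {x : ℝ} (hx : 4 ≤ x) : 1 ≤ Real.log x := by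
  rw [Real.le_log_iff_exp_le (by linarith)]
  linarith [Real.exp_one_lt_d9]

/-- **Theorem 3 (adaptive oracle risk bound).** There is a universal constant `C > 0`
such that for all `n1, n2 > 1`, `σ > 0` and all isotonic `θ*`, the least squares
estimator satisfies, for every isotonic `θ`,
`R(θ*, θ̂) ≤ ‖θ* − θ‖²/n + C k(θ) σ² (log n)⁸ / n` with `n = n1 n2`
(equivalently, `R(θ*, θ̂)` is at most the infimum over `θ ∈ M` of the right-hand
side). -/
theorem isotonic_lse_adaptive_risk :
    ∃ C : ℝ, 0 < C ∧
      ∀ (n1 n2 : ℕ), 1 < n1 → 1 < n2 → ∀ σ : ℝ, 0 < σ →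
        ∀ θstar : Fin n1 → Fin n2 → ℝ, Isotonic θstar →
          ∀ lse, IsLSE lse →
            ∀ θ : Fin n1 → Fin n2 → ℝ, Isotonic θ →
              risk σ θstar lse ≤
                frobSq (θstar - θ) / (n1 * n2) +
                  C * kRect θ * σ ^ 2 * Real.log (n1 * n2) ^ 8 / (n1 * n2) := by
  obtain ⟨C, hC, h⟩ := isotonic_lse_adaptive_risk_general
  refine ⟨C, hC, fun n1 n2 h1 h2 σ hσ θstar _ lse hlse θ hθ ↦
    (h n1 n2 (one_lt_mul'' h1 h2) σ hσ θstar lse hlse θ hθ).trans ?_⟩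
  have hlog : 1 ≤ Real.log (n1 * n2) :=
    one_le_log_of_four_le (by exact_mod_cast Nat.mul_le_mul h1 h2)
  gcongr
  norm_num
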